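/- Let t₀ > 0 and let f be a holomorphic function on the polydisc {ψ < −t₀} with Taylor expansion f(w) = Σ_{α ∈ (ℤ_{≥0})ⁿ} b_α w^α. Then limsup_{t→+∞} ∫_{{−t−1 < ψ < −t}} |f|² e^{−ψ} dλ_n < +∞ if and only if b_α = 0 for every α with Σ_{j=1}^n (α_j+1)/p_j < 1; and in that case the limit lim_{t→+∞} ∫_{{−t−1 < ψ < −t}} |f|² e^{−ψ} dλ_n exists and equals Σ_{α : Σ_j (α_j+1)/p_j = 1} |b_α|² πⁿ / Π_{j=1}^n (α_j+1). -/

import Mathlib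

open MeasureTheory Filter

/-- `psi p w = max_j 2 p_j log |w_j|`. -/
noncomputable def psi {n : ℕ} (p : Fin n → ℝ) (w : Fin n → ℂ) : ℝ :=
  ⨆ j, 2 * p j * Real.log ‖w j‖

/-- The polydisc `{ψ < s} = Π_j {|w_j| < e^{s/(2 p_j)}}`. -/
noncomputable def polydisc {n : ℕ} (p : Fin n → ℝ) (s : ℝ) : Set (Fin n → ℂ) :=
  {w | ∀ j, ‖w j‖ < Real.exp (s / (2 * p j))}

/-- `qExp p α = Σ_j (α_j + 1) / p_j`. -/
noncomputable def qExp {n : ℕ} (p : Fin n → ℝ) (α : Fin n → ℕ) : ℝ :=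
  ∑ j, ((α j : ℝ) + 1) / p j

/-! The polydiscs `{ψ < -t}` are invariant under the rotations `w ↦ (c₁ w₁, …, cₙ wₙ)`, `|cⱼ| = 1`.
Averaging `|f|²` over this torus and using Parseval's identity there removes the cross terms of
`|∑ b_α w^α|²`, so the shell integral is the sum of its values on the monomials `b_α w^α`.

The mass of `|w^α|² dλ` on `{ψ < -s}` is a constant times `e^{-q s}`, where `q = ∑ⱼ (αⱼ + 1) / pⱼ`.
The image of this measure under `-ψ` therefore has density a constant times `q e^{-q s}`, and the
weight `e^{-ψ}` turns the integral over the shell `{-t-1 < ψ < -t}` into a positive multiple of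
`e^{(1 - q) t}`. The whole integral is thus a sum of exponentials with nonnegative coefficients:
it stays bounded exactly when no positive exponent `1 - q` occurs, and then only the terms with
`q = 1` survive in the limit, by dominated convergence.
-/

open scoped ENNReal Topology ComplexConjugate

section ExponentialSum

variable {ι : Type*} (a : ι → ℝ≥0∞) (x : ι → ℝ)

/-- The exponential sum `t ↦ ∑ᵢ aᵢ exp (xᵢ t)`. -/
noncomputable def expSum (t : ℝ) : ℝ≥0∞ := ∑' i, a i * ENNReal.ofReal (Real.exp (x i * t))

variable {a x}

theorem tendsto_expSum_top {i : ι} (hx : 0 < x i) (ha : a i ≠ 0) :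
    Tendsto (expSum a x) atTop (𝓝 ⊤) := by
  have hexp : Tendsto (fun t => ENNReal.ofReal (Real.exp (x i * t))) atTop (𝓝 ⊤) :=
    ENNReal.tendsto_ofReal_atTop.comp
      (Real.tendsto_exp_atTop.comp (tendsto_id.const_mul_atTop hx))
  have hterm := ENNReal.Tendsto.const_mul (a := a i) hexp (Or.inl ENNReal.top_ne_zero)
  rw [ENNReal.mul_top ha] at hterm
  exact tendsto_nhds_top_mono' hterm fun t => ENNReal.le_tsum i

theorem tsum_zero_exponent_le_expSum (t : ℝ) :
    ∑' i : {i // x i = 0}, a i ≤ expSum a x t := by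
  refine le_trans (ENNReal.tsum_le_tsum fun i => ?_)
    (ENNReal.tsum_comp_le_tsum_of_injective Subtype.val_injective _)
  simp [i.2]

theorem tendsto_expSum (ha : ∀ i, 0 < x i → a i = 0) {T : ℝ} (hT : expSum a x T ≠ ⊤) :
    Tendsto (expSum a x) atTop (𝓝 (∑' i : {i // x i = 0}, a i)) := by
  let _ : MeasurableSpace ι := ⊤
  have hterm_ne_top (i) : a i * ENNReal.ofReal (Real.exp (x i * T)) ≠ ⊤ :=
    ne_top_of_le_ne_top hT (ENNReal.le_tsum i)
  have hantitone (i) {t : ℝ} (ht : T ≤ t) :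
      a i * ENNReal.ofReal (Real.exp (x i * t)) ≤ a i * ENNReal.ofReal (Real.exp (x i * T)) := by
    rcases lt_or_ge 0 (x i) with hpos | hnonpos
    · simp [ha i hpos]
    · gcongr a i * ENNReal.ofReal (Real.exp ?_)
      exact mul_le_mul_of_nonpos_left ht hnonpos
  have hlim (i) : Tendsto (fun t => a i * ENNReal.ofReal (Real.exp (x i * t))) atTop
      (𝓝 ({i | x i = 0}.indicator a i)) := by
    rcases lt_trichotomy (x i) 0 with hneg | hzero | hpos
    · have hexp : Tendsto (fun t => ENNReal.ofReal (Real.exp (x i * t))) atTop (𝓝 0) := by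
        simpa using ENNReal.tendsto_ofReal
          (Real.tendsto_exp_atBot.comp (tendsto_id.const_mul_atTop_of_neg hneg))
      have hai : a i ≠ ⊤ := fun h => hterm_ne_top i (by simp [h, ENNReal.top_mul, Real.exp_pos])
      simpa [hneg.ne] using ENNReal.Tendsto.const_mul hexp (Or.inr hai)
    · simp [hzero]
    · simp [ha i hpos, hpos.ne']
  have hsum : ∑' i : {i // x i = 0}, a i = ∑' i, {i | x i = 0}.indicator a i := tsum_subtype _ a
  have hexpSum : expSum a x = fun t =>
      ∫⁻ i, a i * ENNReal.ofReal (Real.exp (x i * t)) ∂Measure.count :=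
    funext fun t => (lintegral_count _).symm
  rw [hexpSum] at hT ⊢
  rw [hsum, ← lintegral_count]
  exact tendsto_lintegral_filter_of_dominated_convergence _
    (Eventually.of_forall fun _ => measurable_from_top)
    ((eventually_ge_atTop T).mono fun t ht => ae_of_all _ fun i => hantitone i ht) hT
    (ae_of_all _ hlim)

theorem limsup_expSum_lt_top_iff {T : ℝ} (hT : expSum a x T ≠ ⊤) :
    limsup (expSum a x) atTop < ⊤ ↔ ∀ i, 0 < x i → a i = 0 := by
  refine ⟨fun hlim i hx => ?_, fun ha => ?_⟩
  · by_contra hai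
    exact hlim.ne (tendsto_expSum_top hx hai).limsup_eq
  · rw [(tendsto_expSum ha hT).limsup_eq]
    exact (tsum_zero_exponent_le_expSum T).trans_lt hT.lt_top

end ExponentialSum

section TorusInvariance

variable {ι : Type*} {M α : ι → Type*} [∀ i, Group (M i)] [∀ i, MulAction (M i) (α i)]
  [∀ i, MeasurableSpace (α i)]

instance measurableConstSMul_pi [∀ i, MeasurableConstSMul (M i) (α i)] :
    MeasurableConstSMul (∀ i, M i) (∀ i, α i) where
  measurable_const_smul c := measurable_pi_lambda _ fun i =>
    (measurable_pi_apply i).const_smul (c i)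

instance smulInvariantMeasure_pi [Fintype ι] [∀ i, MeasurableConstSMul (M i) (α i)]
    (μ : ∀ i, Measure (α i)) [∀ i, SigmaFinite (μ i)]
    [∀ i, SMulInvariantMeasure (M i) (α i) (μ i)] :
    SMulInvariantMeasure (∀ i, M i) (∀ i, α i) (Measure.pi μ) where
  measure_preimage_smul c _ hs :=
    (measurePreserving_pi μ μ fun i => measurePreserving_smul (c i) (μ i)).measure_preimage
      hs.nullMeasurableSet

theorem smulInvariantMeasure_withDensity {G X : Type*} [Group G] [MulAction G X]
    [MeasurableSpace X] [MeasurableConstSMul G X] {μ : Measure X} [SMulInvariantMeasure G X μ]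
    {g : X → ℝ≥0∞} (hg : ∀ (c : G) x, g (c • x) = g x) :
    SMulInvariantMeasure G X (μ.withDensity g) where
  measure_preimage_smul c s hs := by
    have h := (measurePreserving_smul c μ).setLIntegral_comp_preimage_emb
      (measurableEmbedding_const_smul c) g s
    rw [withDensity_apply _ hs, withDensity_apply _ (measurable_const_smul c hs), ← h]
    simp only [hg]

instance : SMulInvariantMeasure Circle ℂ volume where
  measure_preimage_smul c _ hs :=
    (rotation c).measurePreserving.measure_preimage hs.nullMeasurableSet

instance [Fintype ι] : SMulInvariantMeasure (ι → Circle) (ι → ℂ) volume :=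
  smulInvariantMeasure_pi fun _ => volume

end TorusInvariance

section TorusParseval

theorem hasSum_norm_sq_of_orthonormal {𝕜 E κ : Type*} [RCLike 𝕜] [NormedAddCommGroup E]
    [InnerProductSpace 𝕜 E] {v : κ → E} (hv : Orthonormal 𝕜 v) {a : κ → 𝕜} {x : E}
    (hx : HasSum (fun i => a i • v i) x) : HasSum (fun i => ‖a i‖ ^ 2) (‖x‖ ^ 2) := by
  classical
  have hcoeff (i) : inner 𝕜 (v i) x = a i := by
    have h := hx.mapL (innerSL 𝕜 (v i))
    refine (h.unique (hasSum_single i fun k hk => ?_)).trans ?_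
    · simp [hv.2 hk.symm]
    · simp [inner_self_eq_norm_sq_to_K, hv.1]
  have hcoeff_conj (i) : inner 𝕜 x (v i) = conj (a i) := by rw [← hcoeff, inner_conj_symm]
  have h := RCLike.hasSum_re 𝕜 (hx.mapL (innerSL 𝕜 x))
  simpa only [innerSL_apply_apply, inner_smul_right, hcoeff_conj, RCLike.mul_conj,
    ← RCLike.ofReal_pow, RCLike.ofReal_re, inner_self_eq_norm_sq] using h

theorem enorm_toLp_two_sq {X 𝕜 : Type*} [TopologicalSpace X] [CompactSpace X] [MeasurableSpace X]
    [BorelSpace X] [RCLike 𝕜] (μ : Measure X) [IsFiniteMeasure μ] (F : C(X, 𝕜)) :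
    ‖ContinuousMap.toLp 2 μ 𝕜 F‖ₑ ^ 2 = ∫⁻ x, ‖F x‖ₑ ^ 2 ∂μ := by
  rw [Lp.enorm_def, eLpNorm_congr_ae (ContinuousMap.coeFn_toLp μ F)]
  simpa using eLpNorm_nnreal_pow_eq_lintegral (p := 2) (f := F) (μ := μ) two_ne_zero

theorem aemeasurable_tsum {X E κ : Type*} [Countable κ] [MeasurableSpace X] [TopologicalSpace E]
    [TopologicalSpace.PseudoMetrizableSpace E] [MeasurableSpace E] [BorelSpace E] [AddCommMonoid E]
    [MeasurableAdd₂ E] {μ : Measure X} {f : κ → X → E} (hf : ∀ i, AEMeasurable (f i) μ)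
    (hs : ∀ᵐ x ∂μ, Summable fun i => f i x) : AEMeasurable (fun x => ∑' i, f i x) μ :=
  aemeasurable_of_tendsto_metrizable_ae atTop
    (fun s => Finset.aemeasurable_fun_sum s fun i _ => hf i)
    (hs.mono fun _ hx => hx.hasSum)

variable {ι : Type*} [Fintype ι]

variable (ι) in
/-- The normalised Haar measure of the torus `(ℝ/ℤ)^ι`. It is the measure underlying
`UnitAddTorus.mFourierLp`, whose `MeasureSpace` instance is local to its file in Mathlib. -/
noncomputable abbrev torusHaar : Measure (UnitAddTorus ι) :=
  Measure.pi fun _ => AddCircle.haarAddCircle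

theorem lintegral_torusHaar_enorm_tsum_sq {κ : Type*} {k : κ → ι → ℤ} (hk : Function.Injective k)
    {a : κ → ℂ} (ha : Summable a) :
    ∫⁻ θ, ‖∑' i, a i * UnitAddTorus.mFourier (k i) θ‖ₑ ^ 2 ∂torusHaar ι
      = ∑' i, ‖a i‖ₑ ^ 2 := by
  have hseries : Summable fun i => a i • UnitAddTorus.mFourier (k i) :=
    .of_norm (by simpa [norm_smul, UnitAddTorus.mFourier_norm] using ha.norm)
  obtain ⟨F, hF⟩ := hseries
  have hF_apply (θ) : ∑' i, a i * UnitAddTorus.mFourier (k i) θ = F θ :=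
    (hF.mapL (ContinuousMap.evalCLM ℂ θ)).tsum_eq
  have hF_Lp := hF.mapL (ContinuousMap.toLp (E := ℂ) 2 (torusHaar ι) ℂ)
  simp only [map_smul] at hF_Lp
  have hparseval := hasSum_norm_sq_of_orthonormal
    (UnitAddTorus.orthonormal_mFourier.comp k hk) hF_Lp
  simp only [hF_apply]
  rw [← enorm_toLp_two_sq, ← ofReal_norm, ← ENNReal.ofReal_pow (norm_nonneg _), ← hparseval.tsum_eq,
    ENNReal.ofReal_tsum_of_nonneg (fun _ => sq_nonneg _) hparseval.summable]
  simp only [ENNReal.ofReal_pow (norm_nonneg _), ofReal_norm]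

theorem lintegral_eq_lintegral_lintegral_smul {G X Θ : Type*} [Group G] [MulAction G X]
    [MeasurableSpace X] [MeasurableConstSMul G X] [MeasurableSpace Θ]
    {μ : Measure X} [SFinite μ] [SMulInvariantMeasure G X μ]
    (ν : Measure Θ) [IsProbabilityMeasure ν] (c : Θ → G) {g : X → ℝ≥0∞}
    (hg : AEMeasurable (fun z : Θ × X => g (c z.1 • z.2)) (ν.prod μ)) :
    ∫⁻ x, g x ∂μ = ∫⁻ x, ∫⁻ θ, g (c θ • x) ∂ν ∂μ := by
  have hinvariant (θ) : ∫⁻ x, g (c θ • x) ∂μ = ∫⁻ x, g x ∂μ :=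
    (measurePreserving_smul (c θ) μ).lintegral_comp_emb (measurableEmbedding_const_smul (c θ)) g
  rw [← lintegral_lintegral_swap hg]
  simp [hinvariant]

theorem prod_pow_toCircle_smul (α : ι → ℕ) (w : ι → ℂ) (θ : UnitAddTorus ι) :
    ∏ j, ((fun j => (θ j).toCircle) • w) j ^ α j
      = (∏ j, w j ^ α j) * UnitAddTorus.mFourier (fun j => (α j : ℤ)) θ := by
  simp [UnitAddTorus.mFourier, fourier_apply, Circle.smul_def, mul_pow, Finset.prod_mul_distrib,
    mul_comm, AddCircle.toCircle_nsmul]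

variable {b : (ι → ℕ) → ℂ}

theorem lintegral_torusHaar_enorm_powerSeries_sq {w : ι → ℂ}
    (hw : Summable fun α => b α * ∏ j, w j ^ α j) :
    ∫⁻ θ, ‖∑' α, b α * ∏ j, ((fun j => (θ j).toCircle) • w) j ^ α j‖ₑ ^ 2 ∂torusHaar ι
      = ∑' α, ‖b α‖ₑ ^ 2 * ‖∏ j, w j ^ α j‖ₑ ^ 2 := by
  have hcast : Function.Injective fun (α : ι → ℕ) j => (α j : ℤ) :=
    fun α β h => funext fun j => Nat.cast_injective (congrFun h j)
  simpa only [prod_pow_toCircle_smul, mul_assoc, enorm_mul, mul_pow] using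
    lintegral_torusHaar_enorm_tsum_sq hcast hw

theorem summable_powerSeries_circle_smul {w : ι → ℂ} (hw : Summable fun α => b α * ∏ j, w j ^ α j)
    (c : ι → Circle) : Summable fun α => b α * ∏ j, (c • w) j ^ α j := by
  rw [← summable_norm_iff] at hw ⊢
  simpa [Circle.smul_def, Circle.norm_coe] using hw

variable {μ : Measure (ι → ℂ)}

theorem aemeasurable_powerSeries_toCircle_smul
    (hsum : ∀ᵐ w ∂μ, Summable fun α => b α * ∏ j, w j ^ α j) :
    AEMeasurable (fun z : UnitAddTorus ι × (ι → ℂ) =>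
      ∑' α, b α * ∏ j, ((fun j => (z.1 j).toCircle) • z.2) j ^ α j) ((torusHaar ι).prod μ) := by
  refine aemeasurable_tsum (fun α => Measurable.aemeasurable ?_) ?_
  · simp only [Circle.smul_def, Pi.smul_apply', smul_eq_mul]
    fun_prop
  · exact (Measure.quasiMeasurePreserving_snd.ae hsum).mono
      fun z hz => summable_powerSeries_circle_smul hz _

theorem lintegral_enorm_powerSeries_sq [SFinite μ] [SMulInvariantMeasure (ι → Circle) (ι → ℂ) μ]
    (hsum : ∀ᵐ w ∂μ, Summable fun α => b α * ∏ j, w j ^ α j) :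
    ∫⁻ w, ‖∑' α, b α * ∏ j, w j ^ α j‖ₑ ^ 2 ∂μ
      = ∑' α, ‖b α‖ₑ ^ 2 * ∫⁻ w, ‖∏ j, w j ^ α j‖ₑ ^ 2 ∂μ := by
  have hmonomial (α : ι → ℕ) : Measurable fun w : ι → ℂ => ‖∏ j, w j ^ α j‖ₑ ^ 2 := by fun_prop
  calc
    _ = ∫⁻ w, ∫⁻ θ, ‖∑' α, b α * ∏ j, ((fun j => (θ j).toCircle) • w) j ^ α j‖ₑ ^ 2
          ∂torusHaar ι ∂μ :=
      lintegral_eq_lintegral_lintegral_smul (G := ι → Circle) (torusHaar ι)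
        (fun θ j => (θ j).toCircle)
        ((aemeasurable_powerSeries_toCircle_smul hsum).enorm.pow_const 2)
    _ = ∫⁻ w, ∑' α, ‖b α‖ₑ ^ 2 * ‖∏ j, w j ^ α j‖ₑ ^ 2 ∂μ :=
      lintegral_congr_ae (hsum.mono fun w hw => lintegral_torusHaar_enorm_powerSeries_sq hw)
    _ = ∑' α, ‖b α‖ₑ ^ 2 * ∫⁻ w, ‖∏ j, w j ^ α j‖ₑ ^ 2 ∂μ := by
      rw [lintegral_tsum fun α => (hmonomial α).const_mul _ |>.aemeasurable]
      exact tsum_congr fun α => lintegral_const_mul _ (hmonomial α)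

end TorusParseval

section Moments

theorem setIntegral_ball_norm_pow {E : Type*} [NormedAddCommGroup E] [NormedSpace ℝ E]
    [FiniteDimensional ℝ E] [Nontrivial E] [MeasurableSpace E] [BorelSpace E]
    (μ : Measure E) [μ.IsAddHaarMeasure] (m : ℕ) {r : ℝ} (hr : 0 ≤ r) :
    ∫ x in Metric.ball 0 r, ‖x‖ ^ m ∂μ
      = Module.finrank ℝ E / (m + Module.finrank ℝ E) * r ^ (m + Module.finrank ℝ E)
        * μ.real (Metric.ball 0 1) := by
  set d := Module.finrank ℝ E with hd
  have hd_pos : 1 ≤ d := Module.finrank_pos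
  have hradial : ∫ x in Metric.ball 0 r, ‖x‖ ^ m ∂μ
      = ∫ x, (Set.Iio r).indicator (fun y : ℝ => y ^ m) ‖x‖ ∂μ := by
    rw [← integral_indicator Metric.isOpen_ball.measurableSet]
    congr 1 with x
    by_cases hx : ‖x‖ < r <;> simp [Set.indicator, hx]
  have hpow (y : ℝ) : y ^ (d - 1) • (Set.Iio r).indicator (fun y : ℝ => y ^ m) y
      = (Set.Iio r).indicator (fun y : ℝ => y ^ (m + d - 1)) y := by
    by_cases hy : y < r
    · simp [Set.indicator, hy, ← pow_add, show d - 1 + m = m + d - 1 by lia]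
    · simp [Set.indicator, hy]
  have hcast : ((m + d - 1 : ℕ) : ℝ) + 1 = m + d := by
    exact_mod_cast congrArg (Nat.cast (R := ℝ)) (show m + d - 1 + 1 = m + d by lia)
  rw [hradial, integral_fun_norm_addHaar μ, ← hd]
  simp_rw [hpow]
  rw [setIntegral_indicator measurableSet_Iio, Set.Ioi_inter_Iio, ← integral_Ioc_eq_integral_Ioo,
    ← intervalIntegral.integral_of_le hr, integral_pow, hcast, Nat.sub_add_cancel (by lia),
    zero_pow (by lia), nsmul_eq_mul, smul_eq_mul]
  ring

theorem setIntegral_ball_norm_pow_complex (k : ℕ) {r : ℝ} (hr : 0 ≤ r) :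
    ∫ z in Metric.ball (0 : ℂ) r, ‖z‖ ^ (2 * k) = Real.pi / (k + 1) * r ^ (2 * (k + 1)) := by
  rw [setIntegral_ball_norm_pow volume _ hr]
  simp [Measure.real, mul_add]
  field_simp

theorem integrableOn_ball_norm_pow (k : ℕ) (r : ℝ) :
    IntegrableOn (fun z : ℂ => ‖z‖ ^ k) (Metric.ball 0 r) :=
  (ContinuousOn.integrableOn_compact (isCompact_closedBall 0 r) (by fun_prop)).mono_set
    Metric.ball_subset_closedBall

variable {n : ℕ} {p : Fin n → ℝ}

theorem polydisc_eq_pi_ball (p : Fin n → ℝ) (s : ℝ) :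
    polydisc p s = Set.univ.pi fun j => Metric.ball 0 (Real.exp (s / (2 * p j))) := by
  ext w
  simp [polydisc]

/-- The integral of `|w ^ α|²` over the unit polydisc of `ℂⁿ`. -/
noncomputable def unitMoment (α : Fin n → ℕ) : ℝ := Real.pi ^ n / ∏ j, ((α j : ℝ) + 1)

theorem unitMoment_pos (α : Fin n → ℕ) : 0 < unitMoment α :=
  div_pos (pow_pos Real.pi_pos n) (Finset.prod_pos fun _ _ => by positivity)

theorem setLIntegral_polydisc_enorm_monomial_sq (hp : ∀ j, p j ≠ 0) (α : Fin n → ℕ) (s : ℝ) :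
    ∫⁻ w in polydisc p s, ‖∏ j, w j ^ α j‖ₑ ^ 2
      = ENNReal.ofReal (unitMoment α * Real.exp (qExp p α * s)) := by
  have henorm (w : Fin n → ℂ) :
      ‖∏ j, w j ^ α j‖ₑ ^ 2 = ENNReal.ofReal (∏ j, ‖w j‖ ^ (2 * α j)) := by
    rw [← ofReal_norm, ← ENNReal.ofReal_pow (norm_nonneg _)]
    simp [← Finset.prod_pow, pow_mul']
  have hfactor (j) : ∫ z in Metric.ball (0 : ℂ) (Real.exp (s / (2 * p j))), ‖z‖ ^ (2 * α j)
      = Real.pi / (α j + 1) * Real.exp ((α j + 1) / p j * s) := by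
    rw [setIntegral_ball_norm_pow_complex _ (Real.exp_nonneg _), ← Real.exp_nat_mul]
    have := hp j
    congr 2
    push_cast
    field_simp
  simp only [henorm]
  rw [polydisc_eq_pi_ball, volume_pi, Measure.restrict_pi_pi, ← ofReal_integral_eq_lintegral_ofReal
    (.fintype_prod (f := fun j (z : ℂ) => ‖z‖ ^ (2 * α j)) fun j => integrableOn_ball_norm_pow _ _)
    (ae_of_all _ fun w => by positivity),
    integral_fintype_prod_eq_prod (𝕜 := ℝ) fun j (z : ℂ) => ‖z‖ ^ (2 * α j)]
  simp only [hfactor, unitMoment, qExp, Finset.prod_mul_distrib, Finset.prod_div_distrib,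
    Finset.prod_const, Finset.card_univ, Fintype.card_fin, Finset.sum_mul, Real.exp_sum]

end Moments

section ExponentialLaw

theorem setLIntegral_Ioi_ofReal_exp_neg_mul {C q : ℝ} (hC : 0 ≤ C) (hq : 0 < q) (s : ℝ) :
    ∫⁻ x in Set.Ioi s, ENNReal.ofReal (C * q * Real.exp (-q * x))
      = ENNReal.ofReal (C * Real.exp (-q * s)) := by
  have hint := (integrableOn_exp_mul_Ioi (neg_neg_of_pos hq) s).const_mul (C * q)
  rw [← ofReal_integral_eq_lintegral_ofReal hint (ae_of_all _ fun x => by positivity),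
    integral_const_mul, integral_exp_mul_Ioi (neg_neg_of_pos hq)]
  congr 1
  field_simp

theorem measure_eq_of_Ioi {μ ν : Measure ℝ} (hμ : ∀ s, μ (Set.Ioi s) ≠ ⊤)
    (h : ∀ s, μ (Set.Ioi s) = ν (Set.Ioi s)) : μ = ν := by
  refine Measure.ext_of_generateFrom_of_iUnion (Set.range Set.Ioi) (fun k : ℕ => Set.Ioi (-k : ℝ))
    ?_ isPiSystem_Ioi ?_ (fun k => ⟨_, rfl⟩) (fun k => hμ _) ?_
  · rw [← borel_eq_generateFrom_Ioi]
    exact BorelSpace.measurable_eq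
  · refine Set.eq_univ_of_forall fun x => Set.mem_iUnion.2 ?_
    obtain ⟨k, hk⟩ := exists_nat_gt (-x)
    exact ⟨k, neg_lt.1 hk⟩
  · rintro _ ⟨s, rfl⟩
    exact h s

theorem eq_withDensity_exp_of_Ioi {ν : Measure ℝ} {C q : ℝ} (hC : 0 ≤ C) (hq : 0 < q)
    (hν : ∀ s, ν (Set.Ioi s) = ENNReal.ofReal (C * Real.exp (-q * s))) :
    ν = volume.withDensity fun x => ENNReal.ofReal (C * q * Real.exp (-q * x)) := by
  refine measure_eq_of_Ioi (fun s => by simp [hν]) fun s => ?_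
  rw [hν, withDensity_apply _ measurableSet_Ioi, setLIntegral_Ioi_ofReal_exp_neg_mul hC hq]

theorem setLIntegral_Ioo_ofReal_exp_mul (x t : ℝ) :
    ∫⁻ s in Set.Ioo t (t + 1), ENNReal.ofReal (Real.exp (x * s))
      = (∫⁻ s in Set.Ioo 0 1, ENNReal.ofReal (Real.exp (x * s)))
        * ENNReal.ofReal (Real.exp (x * t)) := by
  have h := (measurePreserving_add_right volume t).setLIntegral_comp_preimage_emb
    (measurableEmbedding_addRight t) (fun s => ENNReal.ofReal (Real.exp (x * s)))
    (Set.Ioo t (t + 1))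
  rw [← h, ← lintegral_mul_const _ (by fun_prop)]
  simp [mul_add, Real.exp_add, ENNReal.ofReal_mul, Real.exp_nonneg]

end ExponentialLaw

section Psi

variable {n : ℕ} {p : Fin n → ℝ}

theorem measurable_psi (p : Fin n → ℝ) : Measurable (psi p) :=
  Measurable.iSup fun j => by fun_prop

theorem psi_circle_smul (p : Fin n → ℝ) (c : Fin n → Circle) (w : Fin n → ℂ) :
    psi p (c • w) = psi p w := by
  simp [psi, Circle.smul_def, Circle.norm_coe]

theorem qExp_pos [NeZero n] (hp : ∀ j, 0 < p j) (α : Fin n → ℕ) : 0 < qExp p α :=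
  Finset.sum_pos (fun j _ => div_pos (by positivity) (hp j)) Finset.univ_nonempty

theorem psi_lt_iff [NeZero n] (p : Fin n → ℝ) (w : Fin n → ℂ) (s : ℝ) :
    psi p w < s ↔ ∀ j, 2 * p j * Real.log ‖w j‖ < s :=
  ⟨fun h j => (le_ciSup (Set.finite_range _).bddAbove j).trans_lt h, fun h =>
    let ⟨i, hi⟩ := exists_eq_ciSup_of_finite (f := fun j => 2 * p j * Real.log ‖w j‖)
    (hi.symm.trans_lt (h i) : _)⟩

theorem lt_exp_div_iff {a r s : ℝ} (ha : 0 < a) (hr : 0 < r) :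
    r < Real.exp (s / a) ↔ a * Real.log r < s := by
  rw [← Real.log_lt_iff_lt_exp hr, lt_div_iff₀' ha]

theorem psi_lt_iff_mem_polydisc [NeZero n] (hp : ∀ j, 0 < p j) {w : Fin n → ℂ}
    (hw : ∀ j, w j ≠ 0) (s : ℝ) : psi p w < s ↔ w ∈ polydisc p s := by
  rw [psi_lt_iff]
  exact forall_congr' fun j =>
    (lt_exp_div_iff (mul_pos two_pos (hp j)) (norm_pos_iff.2 (hw j))).symm

theorem mem_polydisc_of_psi_lt [NeZero n] (hp : ∀ j, 0 < p j) {w : Fin n → ℂ} {s : ℝ}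
    (h : psi p w < s) : w ∈ polydisc p s := by
  intro j
  rcases eq_or_ne (w j) 0 with hzero | hne
  · simp [hzero, Real.exp_pos]
  · exact (lt_exp_div_iff (mul_pos two_pos (hp j)) (norm_pos_iff.2 hne)).2
      ((psi_lt_iff p w s).1 h j)

theorem ae_forall_ne_zero : ∀ᵐ w : Fin n → ℂ, ∀ j, w j ≠ 0 :=
  ae_all_iff.2 fun j => by
    rw [ae_iff]
    simpa [volume_pi] using Measure.pi_hyperplane (fun _ : Fin n => (volume : Measure ℂ)) j 0

theorem setOf_psi_lt_ae_eq_polydisc [NeZero n] (hp : ∀ j, 0 < p j) (s : ℝ) :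
    {w | psi p w < s} =ᵐ[volume] polydisc p s :=
  ae_forall_ne_zero.mono fun _ hw => propext (psi_lt_iff_mem_polydisc hp hw s)

theorem map_neg_psi_withDensity_monomial [NeZero n] (hp : ∀ j, 0 < p j) (α : Fin n → ℕ) :
    (volume.withDensity fun w : Fin n → ℂ => ‖∏ j, w j ^ α j‖ₑ ^ 2).map (-psi p)
      = volume.withDensity fun x =>
          ENNReal.ofReal (unitMoment α * qExp p α * Real.exp (-qExp p α * x)) := by
  refine eq_withDensity_exp_of_Ioi (unitMoment_pos α).le (qExp_pos hp α) fun s => ?_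
  have hpreimage : (-psi p) ⁻¹' Set.Ioi s = {w | psi p w < -s} := Set.ext fun w => lt_neg (a := s)
  rw [Measure.map_apply (measurable_psi p).neg measurableSet_Ioi, hpreimage,
    withDensity_apply _ (measurableSet_lt (measurable_psi p) measurable_const),
    setLIntegral_congr (setOf_psi_lt_ae_eq_polydisc hp (-s)),
    setLIntegral_polydisc_enorm_monomial_sq (fun j => (hp j).ne'), mul_neg, neg_mul]

end Psi

section Shell

variable {n : ℕ} {p : Fin n → ℝ}

/-- The shell `{-t - 1 < ψ < -t}`. -/
def shell (p : Fin n → ℝ) (t : ℝ) : Set (Fin n → ℂ) := {w | -t - 1 < psi p w ∧ psi p w < -t}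

theorem measurableSet_shell (p : Fin n → ℝ) (t : ℝ) : MeasurableSet (shell p t) :=
  (measurableSet_lt measurable_const (measurable_psi p)).inter
    (measurableSet_lt (measurable_psi p) measurable_const)

/-- The measure `e^{-ψ} dλ` on the shell `{-t - 1 < ψ < -t}`. -/
noncomputable def shellMeasure (p : Fin n → ℝ) (t : ℝ) : Measure (Fin n → ℂ) :=
  (volume.restrict (shell p t)).withDensity fun w => ENNReal.ofReal (Real.exp (-psi p w))

instance (p : Fin n → ℝ) (t : ℝ) : SFinite (shellMeasure p t) :=
  inferInstanceAs (SFinite (Measure.withDensity _ _))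

instance (p : Fin n → ℝ) (t : ℝ) :
    SMulInvariantMeasure (Fin n → Circle) (Fin n → ℂ) (shellMeasure p t) := by
  rw [shellMeasure, ← withDensity_indicator (measurableSet_shell p t)]
  refine smulInvariantMeasure_withDensity fun c w => ?_
  have hmem : c • w ∈ shell p t ↔ w ∈ shell p t := by
    simp only [shell, Set.mem_ofPred_eq, psi_circle_smul]
  by_cases hw : w ∈ shell p t <;> simp [hmem, hw, psi_circle_smul]

theorem lintegral_shellMeasure (p : Fin n → ℝ) (t : ℝ) (g : (Fin n → ℂ) → ℝ≥0∞) :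
    ∫⁻ w, g w ∂shellMeasure p t
      = ∫⁻ w in shell p t, ENNReal.ofReal (Real.exp (-psi p w)) * g w :=
  lintegral_withDensity_eq_lintegral_mul_non_measurable _
    (measurable_psi p).neg.exp.ennreal_ofReal (ae_of_all _ fun _ => ENNReal.ofReal_lt_top) g

theorem lintegral_shellMeasure_enorm_sq (p : Fin n → ℝ) (t : ℝ) (f : (Fin n → ℂ) → ℂ) :
    ∫⁻ w, ‖f w‖ₑ ^ 2 ∂shellMeasure p t
      = ∫⁻ w in shell p t, ENNReal.ofReal (‖f w‖ ^ 2 * Real.exp (-psi p w)) := by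
  simp only [lintegral_shellMeasure, ENNReal.ofReal_mul (sq_nonneg _), ← ofReal_norm,
    ENNReal.ofReal_pow (norm_nonneg _), mul_comm]

theorem ae_shellMeasure_mem_shell (p : Fin n → ℝ) (t : ℝ) :
    ∀ᵐ w ∂shellMeasure p t, w ∈ shell p t :=
  (withDensity_absolutelyContinuous _ _).ae_le (ae_restrict_mem (measurableSet_shell p t))

theorem shell_eq_preimage_Ioo (p : Fin n → ℝ) (t : ℝ) :
    shell p t = (-psi p) ⁻¹' Set.Ioo t (t + 1) := by
  ext w
  simp only [shell, Set.mem_ofPred_eq, Set.mem_preimage, Pi.neg_apply, Set.mem_Ioo]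
  constructor <;> rintro ⟨h₁, h₂⟩ <;> constructor <;> linarith

/-- The integral of `|w ^ α|² e^{-ψ}` over the shell `{-1 < ψ < 0}`. -/
noncomputable def shellMoment (p : Fin n → ℝ) (α : Fin n → ℕ) : ℝ≥0∞ :=
  ∫⁻ w, ‖∏ j, w j ^ α j‖ₑ ^ 2 ∂shellMeasure p 0

variable [NeZero n]

theorem lintegral_shellMeasure_enorm_monomial_sq (hp : ∀ j, 0 < p j) (α : Fin n → ℕ) (t : ℝ) :
    ∫⁻ w, ‖∏ j, w j ^ α j‖ₑ ^ 2 ∂shellMeasure p t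
      = ENNReal.ofReal (unitMoment α * qExp p α)
        * ∫⁻ s in Set.Ioo t (t + 1), ENNReal.ofReal (Real.exp ((1 - qExp p α) * s)) := by
  have hneg_psi : Measurable (-psi p) := (measurable_psi p).neg
  have hcoeff : 0 ≤ unitMoment α * qExp p α :=
    mul_nonneg (unitMoment_pos α).le (qExp_pos hp α).le
  have hexp (s : ℝ) : ENNReal.ofReal (unitMoment α * qExp p α * Real.exp (-qExp p α * s))
        * ENNReal.ofReal (Real.exp s)
      = ENNReal.ofReal (unitMoment α * qExp p α)
        * ENNReal.ofReal (Real.exp ((1 - qExp p α) * s)) := by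
    rw [← ENNReal.ofReal_mul (by positivity), ← ENNReal.ofReal_mul hcoeff, mul_assoc,
      ← Real.exp_add]
    ring_nf
  calc
    _ = ∫⁻ w in (-psi p) ⁻¹' Set.Ioo t (t + 1), ENNReal.ofReal (Real.exp ((-psi p) w))
          ∂volume.withDensity fun w => ‖∏ j, w j ^ α j‖ₑ ^ 2 := by
      rw [setLIntegral_withDensity_eq_setLIntegral_mul _ (by fun_prop) (by fun_prop)
        (hneg_psi measurableSet_Ioo), lintegral_shellMeasure, shell_eq_preimage_Ioo]
      simp only [Pi.mul_apply, Pi.neg_apply, mul_comm]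
    _ = ∫⁻ s in Set.Ioo t (t + 1), ENNReal.ofReal (Real.exp s)
          ∂volume.withDensity fun x =>
            ENNReal.ofReal (unitMoment α * qExp p α * Real.exp (-qExp p α * x)) := by
      rw [← map_neg_psi_withDensity_monomial hp,
        setLIntegral_map measurableSet_Ioo (by fun_prop) hneg_psi]
    _ = ∫⁻ s in Set.Ioo t (t + 1), ENNReal.ofReal (unitMoment α * qExp p α)
          * ENNReal.ofReal (Real.exp ((1 - qExp p α) * s)) := by
      rw [setLIntegral_withDensity_eq_setLIntegral_mul _ (by fun_prop) (by fun_prop)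
        measurableSet_Ioo]
      exact lintegral_congr hexp
    _ = _ := lintegral_const_mul _ (by fun_prop)

theorem lintegral_shellMeasure_eq_shellMoment_mul (hp : ∀ j, 0 < p j) (α : Fin n → ℕ) (t : ℝ) :
    ∫⁻ w, ‖∏ j, w j ^ α j‖ₑ ^ 2 ∂shellMeasure p t
      = shellMoment p α * ENNReal.ofReal (Real.exp ((1 - qExp p α) * t)) := by
  rw [shellMoment, lintegral_shellMeasure_enorm_monomial_sq hp,
    lintegral_shellMeasure_enorm_monomial_sq hp, setLIntegral_Ioo_ofReal_exp_mul, zero_add,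
    mul_assoc]

theorem shellMoment_ne_zero (hp : ∀ j, 0 < p j) (α : Fin n → ℕ) : shellMoment p α ≠ 0 := by
  rw [shellMoment, lintegral_shellMeasure_enorm_monomial_sq hp]
  refine mul_ne_zero (ENNReal.ofReal_pos.2 (mul_pos (unitMoment_pos α) (qExp_pos hp α))).ne' ?_
  have hsupport : (Function.support fun s => ENNReal.ofReal (Real.exp ((1 - qExp p α) * s)))
      = Set.univ := Set.eq_univ_of_forall fun s => (ENNReal.ofReal_pos.2 (Real.exp_pos _)).ne'
  rw [← pos_iff_ne_zero, lintegral_pos_iff_support (by fun_prop), hsupport]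
  simp

theorem shellMoment_of_qExp_eq_one (hp : ∀ j, 0 < p j) {α : Fin n → ℕ} (hα : qExp p α = 1) :
    shellMoment p α = ENNReal.ofReal (unitMoment α) := by
  simp [shellMoment, lintegral_shellMeasure_enorm_monomial_sq hp, hα]

theorem lintegral_shellMeasure_enorm_sq_ne_top (hp : ∀ j, 0 < p j) {f : (Fin n → ℂ) → ℂ} {s t : ℝ}
    (hf : ContinuousOn f (polydisc p s)) (hst : -t < s) :
    ∫⁻ w, ‖f w‖ₑ ^ 2 ∂shellMeasure p t ≠ ⊤ := by
  let K : Set (Fin n → ℂ) :=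
    Set.univ.pi fun j => Metric.closedBall 0 (Real.exp (-t / (2 * p j)))
  have hK : IsCompact K := isCompact_univ_pi fun j => isCompact_closedBall _ _
  have hK_polydisc : K ⊆ polydisc p s := fun w hw j => by
    have := hp j
    refine (mem_closedBall_zero_iff.1 (hw j trivial)).trans_lt (Real.exp_lt_exp.2 ?_)
    gcongr
  have hshell_K : shell p t ⊆ K := fun w hw j _ =>
    mem_closedBall_zero_iff.2 (mem_polydisc_of_psi_lt hp hw.2 j).le
  obtain ⟨B, hB⟩ := hK.exists_bound_of_continuousOn (hf.mono hK_polydisc)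
  have hbound (w) (hw : w ∈ shell p t) :
      ‖f w‖ ^ 2 * Real.exp (-psi p w) ≤ B ^ 2 * Real.exp (t + 1) := by
    gcongr
    · exact hB w (hshell_K hw)
    · linarith [hw.1]
  rw [lintegral_shellMeasure_enorm_sq]
  exact (setLIntegral_lt_top_of_le_nnreal (hK.measure_lt_top.trans_le' (measure_mono hshell_K)).ne
    ⟨_, fun w hw => ENNReal.ofReal_le_ofReal (hbound w hw)⟩).ne

theorem lintegral_shellMeasure_enorm_sq_eq_expSum (hp : ∀ j, 0 < p j) {f : (Fin n → ℂ) → ℂ}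
    {b : (Fin n → ℕ) → ℂ} {s t : ℝ}
    (hf : ∀ w ∈ polydisc p s, HasSum (fun α : Fin n → ℕ => b α * ∏ j, w j ^ α j) (f w))
    (hst : -t ≤ s) :
    ∫⁻ w, ‖f w‖ₑ ^ 2 ∂shellMeasure p t
      = expSum (fun α => ‖b α‖ₑ ^ 2 * shellMoment p α) (fun α => 1 - qExp p α) t := by
  have hseries : ∀ᵐ w ∂shellMeasure p t,
      HasSum (fun α : Fin n → ℕ => b α * ∏ j, w j ^ α j) (f w) :=
    (ae_shellMeasure_mem_shell p t).mono fun w hw =>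
      hf w (mem_polydisc_of_psi_lt hp (hw.2.trans_le hst))
  calc
    _ = ∫⁻ w, ‖∑' α, b α * ∏ j, w j ^ α j‖ₑ ^ 2 ∂shellMeasure p t :=
      lintegral_congr_ae (hseries.mono fun w hw => by simp only [hw.tsum_eq])
    _ = ∑' α, ‖b α‖ₑ ^ 2 * ∫⁻ w, ‖∏ j, w j ^ α j‖ₑ ^ 2 ∂shellMeasure p t :=
      lintegral_enorm_powerSeries_sq (hseries.mono fun w hw => hw.summable)
    _ = _ := by
      simp only [lintegral_shellMeasure_eq_shellMoment_mul hp, ← mul_assoc, expSum]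

theorem tsum_critical_shellMoment (hp : ∀ j, 0 < p j) (b : (Fin n → ℕ) → ℂ) :
    ∑' α : {α // 1 - qExp p α = 0}, ‖b α‖ₑ ^ 2 * shellMoment p α
      = ∑' α : {α : Fin n → ℕ // qExp p α = 1},
          ENNReal.ofReal (‖b α.1‖ ^ 2 * Real.pi ^ n / ∏ j, ((α.1 j : ℝ) + 1)) := by
  have hcritical (α : Fin n → ℕ) : 1 - qExp p α = 0 ↔ qExp p α = 1 := sub_eq_zero.trans eq_comm
  rw [← (Equiv.subtypeEquivRight hcritical).tsum_eq]
  refine tsum_congr fun α => ?_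
  rw [shellMoment_of_qExp_eq_one hp ((hcritical α).1 α.2), ← ofReal_norm,
    ← ENNReal.ofReal_pow (norm_nonneg _), ← ENNReal.ofReal_mul (sq_nonneg _), unitMoment,
    mul_div_assoc]
  rfl

end Shell

theorem stmt_5 (n : ℕ) (hn : 0 < n) (p : Fin n → ℝ) (hp : ∀ j, 0 < p j)
    (t₀ : ℝ) (ht₀ : 0 < t₀) (f : (Fin n → ℂ) → ℂ) (b : (Fin n → ℕ) → ℂ)
    (hf : DifferentiableOn ℂ f (polydisc p (-t₀)))
    (hTaylor : ∀ w ∈ polydisc p (-t₀),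
      HasSum (fun α : Fin n → ℕ => b α * ∏ j, (w j) ^ (α j)) (f w)) :
    (Filter.limsup (fun t : ℝ =>
        ∫⁻ w in {w : Fin n → ℂ | -t - 1 < psi p w ∧ psi p w < -t},
          ENNReal.ofReal (‖f w‖ ^ 2 * Real.exp (-psi p w))) Filter.atTop < ⊤
      ↔ ∀ α : Fin n → ℕ, qExp p α < 1 → b α = 0) ∧
    ((∀ α : Fin n → ℕ, qExp p α < 1 → b α = 0) →
      Filter.Tendsto (fun t : ℝ =>
          ∫⁻ w in {w : Fin n → ℂ | -t - 1 < psi p w ∧ psi p w < -t},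
            ENNReal.ofReal (‖f w‖ ^ 2 * Real.exp (-psi p w))) Filter.atTop
        (nhds (∑' α : {α : Fin n → ℕ // qExp p α = 1},
          ENNReal.ofReal (‖b α.1‖ ^ 2 * Real.pi ^ n / ∏ j, ((α.1 j : ℝ) + 1))))) := by
  have : NeZero n := ⟨hn.ne'⟩
  set a : (Fin n → ℕ) → ℝ≥0∞ := fun α => ‖b α‖ₑ ^ 2 * shellMoment p α with ha
  have hexpSum : (fun t : ℝ => ∫⁻ w in shell p t, ENNReal.ofReal (‖f w‖ ^ 2 * Real.exp (-psi p w)))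
      =ᶠ[atTop] expSum a (fun α => 1 - qExp p α) :=
    (eventually_ge_atTop t₀).mono fun t ht => (lintegral_shellMeasure_enorm_sq p t f).symm.trans
      (lintegral_shellMeasure_enorm_sq_eq_expSum hp hTaylor (neg_le_neg ht))
  have hfinite : expSum a (fun α => 1 - qExp p α) (t₀ + 1) ≠ ⊤ := by
    rw [← lintegral_shellMeasure_enorm_sq_eq_expSum hp hTaylor (by linarith)]
    exact lintegral_shellMeasure_enorm_sq_ne_top hp hf.continuousOn (by linarith)
  have hvanish : (∀ α, 0 < 1 - qExp p α → a α = 0) ↔ ∀ α, qExp p α < 1 → b α = 0 := by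
    simp [ha, shellMoment_ne_zero hp]
  refine ⟨?_, fun hb => ?_⟩
  · exact (limsup_congr hexpSum ▸ limsup_expSum_lt_top_iff hfinite).trans hvanish
  · rw [← tsum_critical_shellMoment hp]
    exact (tendsto_expSum (hvanish.2 hb) hfinite).congr' hexpSum.symm
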